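/- Let D be a negative integer with D ≡ 0 or 1 (mod 4), let f(x,y) = a x² + b x y + c y² be a primitive positive definite integral binary quadratic form of discriminant D, and let n be a positive integer that is represented by some primitive positive definite integral binary quadratic form of discriminant D but is not represented by f over ℤ_q for some prime q (i.e., n is not represented by the genus of f). If f represents n p² for some prime p, then p divides D. -/

import Mathlib

/-- `n` is represented by the binary quadratic form `(a, b, c)` over the `q`-adic
integers `ℤ_[q]`. -/
def RepresentedOverZq (a b c n : ℤ) (q : ℕ) [Fact q.Prime] : Prop :=
  ∃ x y : ℤ_[q], (a : ℤ_[q]) * x ^ 2 + (b : ℤ_[q]) * x * y + (c : ℤ_[q]) * y ^ 2 = (n : ℤ_[q])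

/-!
Let `f` be a binary quadratic form over a Henselian valuation ring whose discriminant is a unit,
and suppose that `f` represents `n * m ^ 2`, say `f (g • w) = n * m ^ 2` with `w` primitive. If `m`
divides `g`, dividing the vector by `m` represents `n`. Otherwise `f w` is a nonunit; as the
discriminant is a unit, the polar form of `f` pairs `w` with one of the two basis vectors `e` to a
unit, so by Hensel's lemma `f (s • w + e) = r` is solvable in `s` for every `r`, in particular for
`r = n`.

Apply this over `ℤ_q` where `q` is a prime at which `n` is not represented: if the integer form
represents `n * p ^ 2`, then `q` divides the discriminant. Also `q = p`, since otherwise `p` is a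
unit of `ℤ_q` and can be divided out.
-/

open IsLocalRing Polynomial

section QuadraticForm

variable {R M : Type*} [CommRing R] [AddCommGroup M] [Module R M] {Q : QuadraticForm R M}

lemma mem_range_of_mul_sq_mem_range_of_isUnit {n m : R} (hm : IsUnit m)
    (h : n * m ^ 2 ∈ Set.range Q) : n ∈ Set.range Q := by
  obtain ⟨v, hv⟩ := h
  obtain ⟨k, hk⟩ := hm.exists_left_inv
  refine ⟨k • v, ?_⟩
  rw [QuadraticMap.map_smul, hv, smul_eq_mul]
  linear_combination n * (k * m + 1) * hk

variable [HenselianLocalRing R]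

lemma exists_quadratic_eq_zero_of_mem_maximalIdeal {a b : R} (ha : a ∈ maximalIdeal R)
    (hb : IsUnit b) (c : R) : ∃ s : R, a * s ^ 2 + b * s + c = 0 := by
  -- Hensel's lemma needs a monic polynomial; this one is satisfied by `w = a * s`.
  obtain ⟨w, hw, hw_mem⟩ : ∃ w : R,
      (X ^ 2 + C b * X + C (a * c)).IsRoot w ∧ w - 0 ∈ maximalIdeal R := by
    refine HenselianLocalRing.is_henselian _ (by monicity!) 0 ?_ (by simpa using hb)
    simpa using Ideal.mul_mem_right c _ ha
  have hw_root : w ^ 2 + b * w + a * c = 0 := by simpa using hw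
  have hunit : IsUnit (w + b) := by
    by_contra h
    have hb_mem : w + b - (w - 0) ∈ maximalIdeal R := sub_mem h hw_mem
    exact hb_mem (by simpa using hb)
  obtain ⟨u, hu⟩ := hunit.exists_left_inv
  exact ⟨-c * u, by linear_combination c * u ^ 2 * hw_root - c * (u * w + 1) * hu⟩

lemma surjective_of_mem_maximalIdeal_of_isUnit_polar {x y : M} (hx : Q x ∈ maximalIdeal R)
    (hxy : IsUnit (QuadraticMap.polar Q x y)) : Function.Surjective Q := by
  intro r
  obtain ⟨s, hs⟩ := exists_quadratic_eq_zero_of_mem_maximalIdeal hx hxy (Q y - r)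
  refine ⟨s • x + y, ?_⟩
  rw [QuadraticMap.map_add Q, QuadraticMap.map_smul, QuadraticMap.polar_smul_left, smul_eq_mul,
    smul_eq_mul]
  linear_combination hs

end QuadraticForm

section BinaryForm

variable {R : Type*} [CommRing R]

/-- The binary quadratic form `a x² + b x y + c y²` on `R × R`. It turns representability by a
coefficient triple into membership in the range of a `QuadraticForm`. -/
def binaryForm (a b c : R) : QuadraticForm R (R × R) :=
  let x := LinearMap.fst R R R
  let y := LinearMap.snd R R R
  a • .linMulLin x x + b • .linMulLin x y + c • .linMulLin y y

lemma binaryForm_apply (a b c : R) (v : R × R) :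
    binaryForm a b c v = a * v.1 ^ 2 + b * v.1 * v.2 + c * v.2 ^ 2 := by
  simp only [binaryForm, add_apply, smul_apply, QuadraticMap.linMulLin_apply,
    LinearMap.fst_apply, LinearMap.snd_apply, smul_eq_mul]
  ring

lemma isUnit_polar_binaryForm_basis [IsLocalRing R] {a b c : R} (hD : IsUnit (discrim a b c))
    {w : R × R} (hw : IsUnit w.1 ∨ IsUnit w.2) :
    IsUnit (QuadraticMap.polar (binaryForm a b c) w (1, 0)) ∨
      IsUnit (QuadraticMap.polar (binaryForm a b c) w (0, 1)) := by
  have polar_left : QuadraticMap.polar (binaryForm a b c) w (1, 0) = 2 * a * w.1 + b * w.2 := by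
    simp only [QuadraticMap.polar, binaryForm_apply, Prod.fst_add, Prod.snd_add]
    ring
  have polar_right : QuadraticMap.polar (binaryForm a b c) w (0, 1) = b * w.1 + 2 * c * w.2 := by
    simp only [QuadraticMap.polar, binaryForm_apply, Prod.fst_add, Prod.snd_add]
    ring
  rw [polar_left, polar_right]
  by_contra! ⟨hl, hr⟩
  have hmem (r s : R) :
      r * (2 * a * w.1 + b * w.2) + s * (b * w.1 + 2 * c * w.2) ∈ maximalIdeal R :=
    add_mem (Ideal.mul_mem_left _ r hl) (Ideal.mul_mem_left _ s hr)
  rcases hw with hw | hw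
  · refine hmem (-2 * c) b ?_
    convert hD.mul hw using 1
    rw [discrim]
    ring
  · refine hmem b (-2 * a) ?_
    convert hD.mul hw using 1
    rw [discrim]
    ring

lemma binaryForm_surjective_of_mem_maximalIdeal [HenselianLocalRing R] {a b c : R}
    (hD : IsUnit (discrim a b c)) {w : R × R} (hw : IsUnit w.1 ∨ IsUnit w.2)
    (hmem : binaryForm a b c w ∈ maximalIdeal R) : Function.Surjective (binaryForm a b c) :=
  (isUnit_polar_binaryForm_basis hD hw).elim
    (surjective_of_mem_maximalIdeal_of_isUnit_polar hmem)
    (surjective_of_mem_maximalIdeal_of_isUnit_polar hmem)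

lemma exists_eq_smul_primitive [PreValuationRing R] (v : R × R) :
    ∃ (g : R) (w : R × R), v = g • w ∧ (IsUnit w.1 ∨ IsUnit w.2) := by
  obtain ⟨x, y⟩ := v
  rcases ValuationRing.dvd_total x y with ⟨k, rfl⟩ | ⟨k, rfl⟩
  · exact ⟨x, (1, k), by simp, .inl isUnit_one⟩
  · exact ⟨y, (k, 1), by simp, .inr isUnit_one⟩

theorem mem_range_binaryForm_of_mul_sq_mem_range [IsDomain R] [ValuationRing R]
    [HenselianLocalRing R] {a b c n m : R} (hD : IsUnit (discrim a b c)) (hm : m ≠ 0)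
    (h : n * m ^ 2 ∈ Set.range (binaryForm a b c)) : n ∈ Set.range (binaryForm a b c) := by
  obtain ⟨v, hv⟩ := h
  obtain ⟨g, w, rfl, hw⟩ := exists_eq_smul_primitive v
  rw [QuadraticMap.map_smul, smul_eq_mul] at hv
  by_cases hmg : m ∣ g
  · obtain ⟨k, rfl⟩ := hmg
    refine ⟨k • w, mul_right_cancel₀ (pow_ne_zero 2 hm) ?_⟩
    rw [QuadraticMap.map_smul, smul_eq_mul, ← hv]
    ring
  · obtain ⟨k, rfl⟩ : g ∣ m := (ValuationRing.dvd_total g m).resolve_right hmg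
    have hk : k ∈ maximalIdeal R := fun hk ↦ hmg (hk.mul_right_dvd.mpr dvd_rfl)
    have hwk : binaryForm a b c w = n * k * k := by
      refine mul_left_cancel₀ (pow_ne_zero 2 (left_ne_zero_of_mul hm)) ?_
      linear_combination hv
    exact binaryForm_surjective_of_mem_maximalIdeal hD hw
      (hwk ▸ Ideal.mul_mem_left _ (n * k) hk) n

end BinaryForm

section Padic

variable {q : ℕ} [Fact q.Prime]

instance : HenselianLocalRing ℤ_[q] where
  is_henselian f hf a₀ ha₀ hderiv :=
    HenselianRing.is_henselian (I := maximalIdeal ℤ_[q]) f hf a₀ ha₀ (hderiv.map _)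

lemma isUnit_intCast_padicInt_iff {k : ℤ} : IsUnit (k : ℤ_[q]) ↔ ¬ (q : ℤ) ∣ k := by
  rw [← PadicInt.norm_intCast_lt_one_iff, ← PadicInt.not_isUnit_iff, not_not]

lemma representedOverZq_iff_mem_range_binaryForm {a b c n : ℤ} :
    RepresentedOverZq a b c n q ↔ (n : ℤ_[q]) ∈ Set.range (binaryForm (a : ℤ_[q]) b c) := by
  simp only [RepresentedOverZq, Set.mem_range, Prod.exists, binaryForm_apply]

lemma representedOverZq_of_eq {a b c n x y : ℤ} (h : a * x ^ 2 + b * x * y + c * y ^ 2 = n) :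
    RepresentedOverZq a b c n q :=
  ⟨x, y, mod_cast congrArg (Int.cast : ℤ → ℤ_[q]) h⟩

theorem dvd_and_dvd_discrim_of_representedOverZq_mul_sq {a b c n m : ℤ} (hm : m ≠ 0)
    (hn : ¬ RepresentedOverZq a b c n q) (hnm : RepresentedOverZq a b c (n * m ^ 2) q) :
    (q : ℤ) ∣ m ∧ (q : ℤ) ∣ discrim a b c := by
  rw [representedOverZq_iff_mem_range_binaryForm] at hn hnm
  push_cast at hnm
  constructor <;> by_contra hdvd <;> refine hn ?_
  · exact mem_range_of_mul_sq_mem_range_of_isUnit (isUnit_intCast_padicInt_iff.mpr hdvd) hnm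
  · have hD : IsUnit (discrim (a : ℤ_[q]) b c) := by
      simpa [discrim] using isUnit_intCast_padicInt_iff.mpr hdvd
    exact mem_range_binaryForm_of_mul_sq_mem_range hD (Int.cast_ne_zero.mpr hm) hnm

end Padic

theorem prime_dvd_disc_of_rep_np_sq_general (a b c n : ℤ)
    (hnotgenus : ∃ (q : ℕ) (hq : Fact q.Prime), ¬ @RepresentedOverZq a b c n q hq)
    (p : ℕ) (hp : p.Prime)
    (hrep : ∃ x y : ℤ, a * x ^ 2 + b * x * y + c * y ^ 2 = n * (p : ℤ) ^ 2) :
    (p : ℤ) ∣ b ^ 2 - 4 * a * c := by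
  obtain ⟨q, hq, hn⟩ := hnotgenus
  obtain ⟨x, y, hxy⟩ := hrep
  obtain ⟨hqp, hqD⟩ := dvd_and_dvd_discrim_of_representedOverZq_mul_sq
    (Int.natCast_ne_zero.mpr hp.ne_zero) hn (representedOverZq_of_eq hxy)
  obtain rfl : q = p := (Nat.prime_dvd_prime_iff_eq hq.out hp).mp (Int.natCast_dvd_natCast.mp hqp)
  exact hqD

/-- Let `f` be a primitive positive definite integral binary quadratic form
of discriminant `D < 0`, `D ≡ 0, 1 (mod 4)`, and let `n > 0` be represented by some
primitive positive definite form of discriminant `D` but not represented by `f` over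
`ℤ_q` for some prime `q`. If `f` represents `n * p ^ 2` for a prime `p`, then `p ∣ D`. -/
theorem prime_dvd_disc_of_rep_np_sq
    (D : ℤ) (hDneg : D < 0) (hDmod : D % 4 = 0 ∨ D % 4 = 1)
    (a b c : ℤ) (ha : 0 < a) (hprim : Int.gcd a (Int.gcd b c) = 1)
    (hD : b ^ 2 - 4 * a * c = D)
    (n : ℤ) (hn : 0 < n)
    (hrepsome : ∃ a' b' c' x y : ℤ, 0 < a' ∧ Int.gcd a' (Int.gcd b' c') = 1 ∧
        b' ^ 2 - 4 * a' * c' = D ∧ a' * x ^ 2 + b' * x * y + c' * y ^ 2 = n)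
    (hnotgenus : ∃ (q : ℕ) (hq : Fact q.Prime), ¬ @RepresentedOverZq a b c n q hq)
    (p : ℕ) (hp : p.Prime)
    (hrep : ∃ x y : ℤ, a * x ^ 2 + b * x * y + c * y ^ 2 = n * (p : ℤ) ^ 2) :
    (p : ℤ) ∣ D :=
  hD ▸ prime_dvd_disc_of_rep_np_sq_general a b c n hnotgenus p hp hrep
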